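/- Let n ≥ 2 and let u be harmonic on ℝⁿ \ B̄₁ (the exterior of the closed unit ball), continuous up to ∂B₁, and bounded below. Then the limit u_∞ := lim_{|x|→∞} u(x) exists in ℝ ∪ {+∞}; i.e., either u(x) → +∞ as |x| → ∞, or there is a real number a with u(x) → a as |x| → ∞. -/

import Mathlib

noncomputable def lap (n : ℕ) (u : EuclideanSpace ℝ (Fin n) → ℝ)
    (x : EuclideanSpace ℝ (Fin n)) : ℝ :=
  ∑ i, fderiv ℝ (fun y => fderiv ℝ u y (EuclideanSpace.single i 1)) x
    (EuclideanSpace.single i 1)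

/-!
Integrating the Laplacian against the potential `(1 - ‖z‖²) / 2` of the unit ball shows that ball
averages of a harmonic function do not depend on the radius, hence the mean value property and
Harnack's inequality for nearby points. Chaining the latter along a sphere, which is compact and in
dimension at least two connected, and rescaling gives a Harnack constant `C` which is the same for
all spheres around the origin.

Let `L` be the lower limit of `u` at infinity, finite unless `u` tends to `+∞`. Then `u - (L - ε)`
is nonnegative far out and smaller than `2ε` at points arbitrarily far out, so by Harnack
`u ≤ L - ε + 2Cε` on entire spheres of arbitrarily large radius. The maximum principle on the annuli
between these spheres extends the bound to all points far out, and `u` tends to `L`.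
-/

open Bornology Filter InnerProductSpace MeasureTheory Metric Module Set
open scoped Laplacian Manifold NNReal Topology

section Affine

variable {E F : Type*} [NormedAddCommGroup E] [NormedAddCommGroup F] [NormedSpace ℝ F]

theorem fderiv_comp_add_smul [NormedSpace ℝ E] (u : E → F) (a : E) (t : ℝ) :
    fderiv ℝ (fun y ↦ u (a + t • y)) = fun y ↦ t • fderiv ℝ u (a + t • y) := by
  funext y
  rw [fderiv_comp_smul (f := fun y ↦ u (a + y)), fderiv_comp_add_left]

variable [InnerProductSpace ℝ E] [FiniteDimensional ℝ E]

theorem laplacian_comp_add_smul (u : E → F) (a : E) (t : ℝ) (z : E) :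
    Δ (fun y ↦ u (a + t • y)) z = t ^ 2 • Δ u (a + t • z) := by
  have hfderiv₂ : fderiv ℝ (fderiv ℝ fun y ↦ u (a + t • y)) =
      fun y ↦ t • t • fderiv ℝ (fderiv ℝ u) (a + t • y) :=
    calc fderiv ℝ (fderiv ℝ fun y ↦ u (a + t • y))
        = fderiv ℝ (fun y ↦ t • fderiv ℝ u (a + t • y)) := by rw [fderiv_comp_add_smul]
      _ = t • fderiv ℝ (fun y ↦ fderiv ℝ u (a + t • y)) :=
        fderiv_const_smul_field (f := fun y ↦ fderiv ℝ u (a + t • y)) t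
      _ = fun y ↦ t • t • fderiv ℝ (fderiv ℝ u) (a + t • y) := by
        rw [fderiv_comp_add_smul]; rfl
  simp only [laplacian_eq_iteratedFDeriv_stdOrthonormalBasis, iteratedFDeriv_two_apply, hfderiv₂,
    Finset.smul_sum, pow_two, mul_smul, smul_apply]

theorem harmonicAt_comp_add_smul {u : E → F} {a z : E} {t : ℝ} (hu : HarmonicAt u (a + t • z)) :
    HarmonicAt (fun y ↦ u (a + t • y)) z := by
  have hcont : ContinuousAt (fun y : E ↦ a + t • y) z := by fun_prop
  refine ⟨hu.1.comp z (by fun_prop), ?_⟩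
  filter_upwards [hcont.eventually hu.2] with y hy
  simp [laplacian_comp_add_smul, hy]

end Affine

section Calculus

variable {E F : Type*} [NormedAddCommGroup E] [NormedSpace ℝ E] [FiniteDimensional ℝ E]
  [NormedAddCommGroup F] [NormedSpace ℝ F]

theorem exists_contDiff_hasCompactSupport_eventuallyEq {n : ℕ∞} {u : E → F} {K U : Set E}
    (hK : IsCompact K) (hU : IsOpen U) (hKU : K ⊆ U) (hu : ContDiffOn ℝ n u U) :
    ∃ v : E → F, ContDiff ℝ n v ∧ HasCompactSupport v ∧ v =ᶠ[𝓝ˢ K] u := by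
  obtain ⟨L, hL, hKL, hLU⟩ := exists_compact_between hK hU hKU
  obtain ⟨f, hfK, hfL, -⟩ :=
    exists_contMDiffMap_one_nhds_of_subset_interior 𝓘(ℝ, E) hK.isClosed hKL (n := n)
  have hf : ContDiff ℝ n f := f.contMDiff.contDiff
  have hfL : tsupport f ⊆ L :=
    closure_minimal (fun x hx ↦ by_contra fun h ↦ hx (hfL x h)) hL.isClosed
  refine ⟨fun x ↦ f x • u x, contDiff_iff_contDiffAt.2 fun x ↦ ?_,
    HasCompactSupport.smul_right (hL.of_isClosed_subset (isClosed_tsupport f) hfL), ?_⟩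
  · by_cases hx : x ∈ tsupport f
    · exact hf.contDiffAt.smul (hu.contDiffAt (hU.mem_nhds (hLU (hfL hx))))
    · refine contDiffAt_const (c := 0) |>.congr_of_eventuallyEq ?_
      filter_upwards [notMem_tsupport_iff_eventuallyEq.1 hx] with y hy
      simp [hy]
  · filter_upwards [hfK] with x hx
    simp [hx]

theorem hasDerivAt_setIntegral_comp_smul [MeasurableSpace E] [BorelSpace E] {μ : Measure E}
    [IsFiniteMeasureOnCompacts μ] {s : Set E} (hs : MeasurableSet s) (hb : IsBounded s)
    {v : E → F} (hv : ContDiff ℝ 1 v) (t : ℝ) :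
    HasDerivAt (fun t : ℝ ↦ ∫ z in s, v (t • z) ∂μ) (∫ z in s, fderiv ℝ v (t • z) z ∂μ) t := by
  have hv' : Continuous (fderiv ℝ v) := hv.continuous_fderiv one_ne_zero
  have hint {g : E → F} (hg : Continuous g) : IntegrableOn g s μ :=
    (hg.continuousOn.integrableOn_compact hb.isCompact_closure).mono_set subset_closure
  obtain ⟨C, hC⟩ := (((isCompact_closedBall t 1).prod hb.isCompact_closure).image
    continuous_smul).exists_bound_of_continuousOn hv'.continuousOn
  refine (hasDerivAt_integral_of_dominated_loc_of_deriv_le (bound := fun z ↦ C * ‖z‖)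
    (F' := fun τ z ↦ fderiv ℝ v (τ • z) z) (closedBall_mem_nhds t one_pos)
    (.of_forall fun τ ↦ (hint (by fun_prop : Continuous fun z ↦ v (τ • z))).aestronglyMeasurable)
    (hint (by fun_prop)) (hint (by fun_prop)).aestronglyMeasurable
    (ae_restrict_of_forall_mem hs fun z hz τ hτ ↦ ?_)
    (((by fun_prop : Continuous fun z : E ↦ C * ‖z‖).continuousOn.integrableOn_compact
      hb.isCompact_closure).mono_set subset_closure) (.of_forall fun z τ _ ↦ ?_)).2
  · exact (fderiv ℝ v (τ • z)).le_of_opNorm_le (hC _ ⟨(τ, z), ⟨hτ, subset_closure hz⟩, rfl⟩) z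
  · have hline : HasDerivAt (fun τ : ℝ ↦ τ • z) z τ := by
      simpa using (hasDerivAt_id τ).smul_const z
    exact (hv.differentiable one_ne_zero _).hasFDerivAt.comp_hasDerivAt τ hline

end Calculus

section BallPotential

variable {E : Type*} [NormedAddCommGroup E]

/-- The compactly supported potential `(1 - ‖z‖²) / 2` of the vector field `-z` on the unit ball,
extended by `0` outside it. Integrating by parts against it replaces the surface integrals in the
classical proof of the mean value property. -/
noncomputable def ballPotential (z : E) : ℝ := (1 - min 1 ‖z‖ ^ 2) / 2

theorem ballPotential_of_one_le_norm {z : E} (hz : 1 ≤ ‖z‖) : ballPotential z = 0 := by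
  simp [ballPotential, hz]

theorem ballPotential_of_norm_le_one {z : E} (hz : ‖z‖ ≤ 1) :
    ballPotential z = (1 - ‖z‖ ^ 2) / 2 := by
  simp [ballPotential, hz]

theorem hasCompactSupport_ballPotential [ProperSpace E] :
    HasCompactSupport (ballPotential : E → ℝ) :=
  .intro (isCompact_closedBall 0 1) fun z hz ↦
    ballPotential_of_one_le_norm (by simpa using (not_le.1 (mem_closedBall_zero_iff.not.1 hz)).le)

theorem lipschitzWith_ballPotential : LipschitzWith 1 (ballPotential : E → ℝ) := by
  refine .of_dist_le_mul fun x y ↦ ?_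
  have hdiff : |min 1 ‖y‖ - min 1 ‖x‖| ≤ dist x y :=
    calc |min 1 ‖y‖ - min 1 ‖x‖| ≤ max |1 - 1| |‖y‖ - ‖x‖| := abs_min_sub_min_le_max ..
      _ = |‖y‖ - ‖x‖| := by simp
      _ ≤ ‖y - x‖ := abs_norm_sub_norm_le y x
      _ = dist x y := (dist_eq_norm' x y).symm
  have hsum : |(min 1 ‖y‖ + min 1 ‖x‖) / 2| ≤ 1 := by
    rw [abs_of_nonneg (by positivity)]
    linarith [min_le_left 1 ‖x‖, min_le_left 1 ‖y‖]
  calc dist (ballPotential x) (ballPotential y)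
      = |(min 1 ‖y‖ + min 1 ‖x‖) / 2| * |min 1 ‖y‖ - min 1 ‖x‖| := by
        rw [Real.dist_eq, ← abs_mul, ballPotential, ballPotential]
        ring_nf
    _ ≤ 1 * dist x y := by gcongr

variable [InnerProductSpace ℝ E]

theorem lineDeriv_ballPotential {z : E} (hz : z ∉ sphere 0 1) (v : E) :
    lineDeriv ℝ ballPotential z v = -(ball 0 1).indicator (fun z ↦ inner ℝ z v) z := by
  rw [mem_sphere_zero_iff_norm] at hz
  rcases lt_or_gt_of_ne hz with hz | hz
  · have hev : ballPotential =ᶠ[𝓝 z] fun y : E ↦ 2⁻¹ * (1 - ‖y‖ ^ 2) := by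
      filter_upwards [continuous_norm.continuousAt.eventually_lt_const hz] with y hy
      rw [ballPotential_of_norm_le_one hy.le, div_eq_inv_mul]
    have hderiv := ((hasStrictFDerivAt_norm_sq z).hasFDerivAt.const_sub 1).const_mul (2⁻¹ : ℝ)
    rw [hev.lineDeriv_eq, (hderiv.hasLineDerivAt v).lineDeriv,
      indicator_of_mem (mem_ball_zero_iff.2 hz)]
    simp
  · have hev : ballPotential =ᶠ[𝓝 z] fun _ : E ↦ (0 : ℝ) := by
      filter_upwards [continuous_norm.continuousAt.eventually_const_lt hz] with y hy
      exact ballPotential_of_one_le_norm hy.le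
    rw [hev.lineDeriv_eq, indicator_of_notMem (mem_ball_zero_iff.not.2 hz.le.not_gt)]
    simp [lineDeriv]

variable [FiniteDimensional ℝ E] [MeasurableSpace E] [BorelSpace E] (μ : Measure E)
  [μ.IsAddHaarMeasure]

theorem setIntegral_ball_inner_mul {C : ℝ≥0} {f : E → ℝ} (hf : LipschitzWith C f) (v : E) :
    ∫ z in ball 0 1, inner ℝ z v * f z ∂μ = ∫ z, lineDeriv ℝ f z v * ballPotential z ∂μ := by
  rw [hf.integral_lineDeriv_mul_eq lipschitzWith_ballPotential hasCompactSupport_ballPotential,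
    ← integral_indicator measurableSet_ball]
  have hsphere : ∀ᵐ z ∂μ, z ∉ sphere (0 : E) 1 :=
    measure_eq_zero_iff_ae_notMem.1 (Measure.addHaar_sphere_of_ne_zero μ 0 one_ne_zero)
  refine integral_congr_ae ?_
  filter_upwards [hsphere] with z hz
  rw [lineDeriv_ballPotential hz]
  by_cases h : z ∈ ball (0 : E) 1 <;> simp [h]

theorem setIntegral_ball_fderiv_self {w : E → ℝ} (hw : ContDiff ℝ 2 w)
    (hc : HasCompactSupport w) :
    ∫ z in ball 0 1, fderiv ℝ w z z ∂μ = ∫ z, ballPotential z * Δ w z ∂μ := by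
  let e := stdOrthonormalBasis ℝ E
  have hpot : Continuous (ballPotential : E → ℝ) := lipschitzWith_ballPotential.continuous
  have hw' : ContDiff ℝ 1 (fderiv ℝ w) := hw.fderiv_right (by norm_num)
  have hcoord (i) : ContDiff ℝ 1 fun z ↦ fderiv ℝ w z (e i) := hw'.clm_apply contDiff_const
  have hparts (i) : ∫ z in ball 0 1, inner ℝ z (e i) * fderiv ℝ w z (e i) ∂μ =
      ∫ z, ballPotential z * fderiv ℝ (fderiv ℝ w) z (e i) (e i) ∂μ := by
    obtain ⟨C, hC⟩ := (hcoord i).lipschitzWith_of_hasCompactSupport (𝕂 := ℝ)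
      (hc.fderiv_apply (𝕜 := ℝ) (e i)) one_ne_zero
    rw [setIntegral_ball_inner_mul μ hC]
    refine integral_congr_ae (.of_forall fun z ↦ ?_)
    have hderiv := (hw'.differentiable one_ne_zero z).hasFDerivAt.clm_apply
      (hasFDerivAt_const (e i) z)
    simp [(hderiv.hasLineDerivAt (e i)).lineDeriv, mul_comm]
  calc ∫ z in ball 0 1, fderiv ℝ w z z ∂μ
      = ∑ i, ∫ z in ball 0 1, inner ℝ z (e i) * fderiv ℝ w z (e i) ∂μ := by
        rw [← integral_finsetSum]
        · refine integral_congr_ae (.of_forall fun z ↦ ?_)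
          simp only
          conv_lhs => enter [2]; rw [← e.sum_repr' z]
          simp [real_inner_comm]
        · exact fun i _ ↦ (Continuous.continuousOn (by fun_prop)).integrableOn_compact
            (isCompact_closedBall 0 1) |>.mono_set ball_subset_closedBall
    _ = ∑ i, ∫ z, ballPotential z * fderiv ℝ (fderiv ℝ w) z (e i) (e i) ∂μ := by
        simp only [hparts]
    _ = ∫ z, ballPotential z * Δ w z ∂μ := by
        rw [← integral_finsetSum]
        · simp [laplacian_eq_iteratedFDeriv_stdOrthonormalBasis, iteratedFDeriv_two_apply,
            Finset.mul_sum, e]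
        · exact fun i _ ↦ Continuous.integrable_of_hasCompactSupport (by fun_prop)
            hasCompactSupport_ballPotential.mul_right

end BallPotential

section MeanValue

variable {E : Type*} [NormedAddCommGroup E] [InnerProductSpace ℝ E] [FiniteDimensional ℝ E]
  [MeasurableSpace E] [BorelSpace E] (μ : Measure E) [μ.IsAddHaarMeasure]

theorem setIntegral_ball_fderiv_comp_smul_eq_zero {v : E → ℝ} (hv : ContDiff ℝ 2 v)
    (hc : HasCompactSupport v) (hharm : HarmonicOnNhd v (ball 0 1)) {t : ℝ} (ht : t ∈ Ioo 0 1) :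
    ∫ z in ball 0 1, fderiv ℝ v (t • z) z ∂μ = 0 := by
  have hfderiv : fderiv ℝ (fun y ↦ v (t • y)) = fun z ↦ t • fderiv ℝ v (t • z) := by
    simpa using fderiv_comp_add_smul v 0 t
  have hpotential (z : E) : ballPotential z * Δ (fun y ↦ v (t • y)) z = 0 := by
    rcases lt_or_ge ‖z‖ 1 with hz | hz
    · have htz : t • z ∈ ball (0 : E) 1 := by
        rw [mem_ball_zero_iff, norm_smul, Real.norm_of_nonneg ht.1.le]
        exact mul_lt_one_of_nonneg_of_lt_one_left ht.1.le ht.2 hz.le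
      have hΔ : Δ (fun y ↦ v (t • y)) z = t ^ 2 • Δ v (t • z) := by
        simpa using laplacian_comp_add_smul v 0 t z
      simp [hΔ, (hharm _ htz).2.self_of_nhds]
    · rw [ballPotential_of_one_le_norm hz, zero_mul]
  have hscaled : t * ∫ z in ball 0 1, fderiv ℝ v (t • z) z ∂μ = 0 :=
    calc t * ∫ z in ball 0 1, fderiv ℝ v (t • z) z ∂μ
        = ∫ z in ball 0 1, fderiv ℝ (fun y ↦ v (t • y)) z z ∂μ := by
          simp [hfderiv, integral_const_mul]
      _ = ∫ z, ballPotential z * Δ (fun y ↦ v (t • y)) z ∂μ :=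
        setIntegral_ball_fderiv_self μ (hv.comp (contDiff_const_smul t)) (hc.comp_smul ht.1.ne')
      _ = 0 := by simp [hpotential]
  exact (mul_eq_zero.1 hscaled).resolve_left ht.1.ne'

theorem setIntegral_unitBall_eq_of_harmonicOnNhd {u : E → ℝ}
    (hu : HarmonicOnNhd u (closedBall 0 1)) :
    ∫ z in ball 0 1, u z ∂μ = μ.real (ball 0 1) * u 0 := by
  obtain ⟨v, hv, hc, hvu⟩ := exists_contDiff_hasCompactSupport_eventuallyEq (n := 2)
    (isCompact_closedBall 0 1) (isOpen_setOfPred_harmonicAt u) hu fun x hx ↦ hx.1.contDiffWithinAt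
  have hharm : HarmonicOnNhd v (ball 0 1) := fun z hz ↦
    (harmonicAt_congr_nhds (hvu.filter_mono (nhds_le_nhdsSet (ball_subset_closedBall hz)))).2
      (hu z (ball_subset_closedBall hz))
  have hderiv (t : ℝ) := hasDerivAt_setIntegral_comp_smul (μ := μ) measurableSet_ball
    (isBounded_ball (x := (0 : E)) (r := 1)) (hv.of_le one_le_two) t
  obtain ⟨t, ht, hslope⟩ := exists_hasDerivAt_eq_slope _ _ one_pos
    (fun t _ ↦ (hderiv t).continuousAt.continuousWithinAt) fun t _ ↦ hderiv t
  rw [setIntegral_ball_fderiv_comp_smul_eq_zero μ hv hc hharm ht] at hslope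
  have hconst : ∫ z in ball 0 1, v z ∂μ = μ.real (ball 0 1) * v 0 := by
    simpa [sub_eq_zero] using hslope.symm
  rw [← hvu.self_of_nhdsSet (mem_closedBall_self zero_le_one), ← hconst]
  exact setIntegral_congr_fun measurableSet_ball fun z hz ↦
    (hvu.self_of_nhdsSet (ball_subset_closedBall hz)).symm

theorem measureReal_ball_of_pos (x : E) {r : ℝ} (hr : 0 < r) :
    μ.real (ball x r) = r ^ finrank ℝ E * μ.real (ball 0 1) := by
  simp [measureReal_def, Measure.addHaar_ball_of_pos μ x hr, hr.le]

theorem setIntegral_ball_eq_of_harmonicOnNhd {u : E → ℝ} {x : E} {r : ℝ} (hr : 0 < r)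
    (hu : HarmonicOnNhd u (closedBall x r)) :
    ∫ y in ball x r, u y ∂μ = μ.real (ball x r) * u x := by
  have hunit : HarmonicOnNhd (fun z ↦ u (x + r • z)) (closedBall 0 1) := fun z hz ↦ by
    refine harmonicAt_comp_add_smul (hu _ ?_)
    simpa [norm_smul, abs_of_pos hr] using
      mul_le_of_le_one_right hr.le (mem_closedBall_zero_iff.1 hz)
  have hrd : r ^ finrank ℝ E ≠ 0 := pow_ne_zero _ hr.ne'
  calc ∫ y in ball x r, u y ∂μ
      = ∫ y in ball 0 r, u (x + y) ∂μ := by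
        rw [← (measurePreserving_add_left μ x).setIntegral_preimage_emb
          (measurableEmbedding_addLeft x)]
        simp
    _ = r ^ finrank ℝ E * ∫ z in ball 0 1, u (x + r • z) ∂μ := by
        rw [Measure.setIntegral_comp_smul_of_pos μ (fun y ↦ u (x + y)) _ hr,
          smul_unitBall_of_pos hr, smul_eq_mul, mul_inv_cancel_left₀ hrd]
    _ = μ.real (ball x r) * u x := by
        rw [setIntegral_unitBall_eq_of_harmonicOnNhd μ hunit, measureReal_ball_of_pos μ x hr,
          smul_zero, add_zero, mul_assoc]

end MeanValue

section Harnack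

variable {E : Type*} [NormedAddCommGroup E] [InnerProductSpace ℝ E] [FiniteDimensional ℝ E]
  {U K : Set E} {C D : ℝ} {x y z : E}

theorem le_two_pow_finrank_mul_of_harmonicOnNhd {v : E → ℝ} {r : ℝ} (hr : 0 < r)
    (hv : HarmonicOnNhd v (closedBall x (2 * r)))
    (hnonneg : ∀ z ∈ closedBall x (2 * r), 0 ≤ v z) (hxy : dist y x ≤ r) :
    v y ≤ 2 ^ finrank ℝ E * v x := by
  borelize E
  let μ : Measure E := Measure.addHaar
  have hclosed : closedBall y r ⊆ closedBall x (2 * r) :=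
    closedBall_subset_closedBall' (by linarith)
  have hball : ball y r ⊆ ball x (2 * r) := ball_subset_ball' (by linarith)
  have hvol : μ.real (ball x (2 * r)) = 2 ^ finrank ℝ E * μ.real (ball y r) := by
    rw [measureReal_ball_of_pos μ x (by positivity), measureReal_ball_of_pos μ y hr, mul_pow,
      mul_assoc]
  have hpos : 0 < μ.real (ball y r) :=
    ENNReal.toReal_pos (measure_ball_pos μ y hr).ne' measure_ball_lt_top.ne
  refine le_of_mul_le_mul_left ?_ hpos
  calc μ.real (ball y r) * v y = ∫ z in ball y r, v z ∂μ :=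
        (setIntegral_ball_eq_of_harmonicOnNhd μ hr (hv.mono hclosed)).symm
    _ ≤ ∫ z in ball x (2 * r), v z ∂μ := by
        refine setIntegral_mono_set ?_ ?_ hball.eventuallyLE
        · exact (hv.continuousOn.integrableOn_compact (isCompact_closedBall x _)).mono_set
            ball_subset_closedBall
        · exact ae_restrict_of_forall_mem measurableSet_ball fun z hz ↦
            hnonneg z (ball_subset_closedBall hz)
    _ = μ.real (ball x (2 * r)) * v x :=
        setIntegral_ball_eq_of_harmonicOnNhd μ (by positivity) hv
    _ = μ.real (ball y r) * (2 ^ finrank ℝ E * v x) := by rw [hvol]; ring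

/-- `C` is a Harnack constant for the pair `(x, y)` in `U`: it bounds `v y / v x` simultaneously for
all nonnegative harmonic functions `v` on `U`. The bound is stated without division, so that `v` may
vanish at `x`. -/
def IsHarnackConstant (U : Set E) (C : ℝ) (x y : E) : Prop :=
  ∀ v : E → ℝ, HarmonicOnNhd v U → (∀ z ∈ U, 0 ≤ v z) → v y ≤ C * v x

theorem IsHarnackConstant.mono (h : IsHarnackConstant U C x y) (hx : x ∈ U) (hCD : C ≤ D) :
    IsHarnackConstant U D x y := fun v hv hnonneg ↦
  (h v hv hnonneg).trans (mul_le_mul_of_nonneg_right hCD (hnonneg x hx))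

theorem IsHarnackConstant.trans (hxy : IsHarnackConstant U C x y)
    (hyz : IsHarnackConstant U D y z) (hD : 0 ≤ D) : IsHarnackConstant U (D * C) x z :=
  fun v hv hnonneg ↦
    calc v z ≤ D * v y := hyz v hv hnonneg
      _ ≤ D * (C * v x) := by gcongr; exact hxy v hv hnonneg
      _ = D * C * v x := (mul_assoc D C _).symm

theorem eventually_isHarnackConstant (hU : U ∈ 𝓝 x) :
    ∀ᶠ y in 𝓝 x, IsHarnackConstant U (2 ^ finrank ℝ E) x y ∧
      IsHarnackConstant U (2 ^ finrank ℝ E) y x := by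
  obtain ⟨r, hr, hrU⟩ := nhds_basis_closedBall.mem_iff.1 hU
  filter_upwards [closedBall_mem_nhds x (by positivity : 0 < r / 3)] with y hy
  have hyx : dist y x ≤ r / 3 := hy
  have hxU : closedBall x (2 * (r / 3)) ⊆ U :=
    (closedBall_subset_closedBall (by linarith)).trans hrU
  have hyU : closedBall y (2 * (r / 3)) ⊆ U :=
    (closedBall_subset_closedBall' (by linarith)).trans hrU
  exact ⟨fun v hv hnonneg ↦ le_two_pow_finrank_mul_of_harmonicOnNhd (by positivity) (hv.mono hxU)
      (fun z hz ↦ hnonneg z (hxU hz)) hyx,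
    fun v hv hnonneg ↦ le_two_pow_finrank_mul_of_harmonicOnNhd (by positivity) (hv.mono hyU)
      (fun z hz ↦ hnonneg z (hyU hz)) (dist_comm x y ▸ hyx)⟩

theorem exists_isHarnackConstant_of_isPreconnected (hU : IsOpen U) (hKU : K ⊆ U)
    (hK : IsPreconnected K) (hx : x ∈ K) (hy : y ∈ K) : ∃ C, 0 ≤ C ∧ IsHarnackConstant U C x y := by
  refine hK.induction₂' (fun x y ↦ ∃ C, 0 ≤ C ∧ IsHarnackConstant U C x y) (fun x hx ↦ ?_) ?_ hx hy
  · filter_upwards [nhdsWithin_le_nhds (eventually_isHarnackConstant (hU.mem_nhds (hKU hx)))]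
      with y ⟨hxy, hyx⟩
    exact ⟨⟨_, by positivity, hxy⟩, ⟨_, by positivity, hyx⟩⟩
  · rintro x y z - - - ⟨C, hC, hxy⟩ ⟨D, hD, hyz⟩
    exact ⟨D * C, by positivity, hxy.trans hyz hD⟩

theorem exists_isHarnackConstant_of_isCompact (hU : IsOpen U) (hKU : K ⊆ U) (hKc : IsCompact K)
    (hK : IsPreconnected K) : ∃ C, 0 ≤ C ∧ ∀ x ∈ K, ∀ y ∈ K, IsHarnackConstant U C x y := by
  suffices ∃ C, 0 ≤ C ∧ ∀ p ∈ K ×ˢ K, p.1 ∈ U → IsHarnackConstant U C p.1 p.2 by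
    obtain ⟨C, hC, h⟩ := this
    exact ⟨C, hC, fun x hx y hy ↦ h (x, y) ⟨hx, hy⟩ (hKU hx)⟩
  refine (hKc.prod hKc).induction_on
    (p := fun S ↦ ∃ C, 0 ≤ C ∧ ∀ p ∈ S, p.1 ∈ U → IsHarnackConstant U C p.1 p.2)
    ⟨0, le_rfl, by simp⟩ ?_ ?_ ?_
  · rintro S T hST ⟨C, hC, hT⟩
    exact ⟨C, hC, fun p hp ↦ hT p (hST hp)⟩
  · rintro S T ⟨C, hC, hS⟩ ⟨D, -, hT⟩
    refine ⟨max C D, le_max_of_le_left hC, fun p hp hpU ↦ ?_⟩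
    exact hp.elim (fun hp ↦ (hS p hp hpU).mono hpU (le_max_left C D))
      fun hp ↦ (hT p hp hpU).mono hpU (le_max_right C D)
  · rintro ⟨x, y⟩ ⟨hx, hy⟩
    obtain ⟨C, hC, hxy⟩ := exists_isHarnackConstant_of_isPreconnected hU hKU hK hx hy
    have hlocal := (eventually_isHarnackConstant (hU.mem_nhds (hKU hx))).prod_nhds
      (eventually_isHarnackConstant (hU.mem_nhds (hKU hy)))
    exact ⟨_, nhdsWithin_le_nhds hlocal, 2 ^ finrank ℝ E * (C * 2 ^ finrank ℝ E), by positivity,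
      fun p hp _ ↦ (hp.1.2.trans hxy hC).trans hp.2.1 (by positivity)⟩

end Harnack

section MaximumPrinciple

variable {E : Type*} [NormedAddCommGroup E] [InnerProductSpace ℝ E] [FiniteDimensional ℝ E]

theorem eventually_eq_of_isLocalMax_of_harmonicAt {u : E → ℝ} {x : E} (hmax : IsLocalMax u x)
    (hu : HarmonicAt u x) : ∀ᶠ y in 𝓝 x, u y = u x := by
  have hU : {y | HarmonicAt u y ∧ u y ≤ u x} ∈ 𝓝 x :=
    inter_mem ((isOpen_setOfPred_harmonicAt u).mem_nhds hu) hmax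
  filter_upwards [eventually_isHarnackConstant hU, hmax] with y ⟨hharnack, _⟩ hy
  have hle : u x - u y ≤ _ * (u x - u x) := hharnack (fun z ↦ u x - u z)
    (fun z hz ↦ (harmonicAt_const (u x)).sub hz.1) fun z hz ↦ sub_nonneg.2 hz.2
  rw [sub_self, mul_zero, sub_nonpos] at hle
  exact hy.antisymm hle

theorem le_of_forall_mem_frontier_le_of_harmonicContOnCl [Nontrivial E] {u : E → ℝ} {U : Set E}
    {A : ℝ} (hb : IsBounded U) (hu : HarmonicContOnCl u U) (hA : ∀ z ∈ frontier U, u z ≤ A) {x : E}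
    (hx : x ∈ closure U) : u x ≤ A := by
  obtain ⟨w, hwU, hw⟩ := hb.isCompact_closure.exists_isMaxOn ⟨x, hx⟩ hu.continuousOn
  refine (hw hx).trans (not_lt.1 fun hAw ↦ ?_)
  let S : Set E := closure U ∩ u ⁻¹' {u w}
  have hSclosed : IsClosed S :=
    hu.continuousOn.preimage_isClosed_of_isClosed isClosed_closure isClosed_singleton
  have hSinterior : S ⊆ interior U := fun y hy ↦ by
    by_contra hyU
    exact (hA y ⟨hy.1, hyU⟩).not_gt (hAw.trans_eq hy.2.symm)
  have hSopen : IsOpen S := isOpen_iff_mem_nhds.2 fun y hy ↦ by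
    have hyU : U ∈ 𝓝 y := mem_interior_iff_mem_nhds.1 (hSinterior hy)
    have hmax : IsLocalMax u y := by
      filter_upwards [hyU] with z hz
      exact (hw (subset_closure hz)).trans_eq hy.2.symm
    filter_upwards [hyU, eventually_eq_of_isLocalMax_of_harmonicAt hmax
      (hu.harmonicOnNhd y (mem_of_mem_nhds hyU))] with z hz hzy
    exact ⟨subset_closure hz, hzy.trans hy.2⟩
  have hSuniv : S = univ := IsClopen.eq_univ ⟨hSclosed, hSopen⟩ ⟨w, hwU, rfl⟩
  exact NormedSpace.unbounded_univ ℝ E (hSuniv ▸ hb.closure.subset inter_subset_left)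

end MaximumPrinciple

section Exterior

variable {E : Type*} [NormedAddCommGroup E] [InnerProductSpace ℝ E] [FiniteDimensional ℝ E]

theorem exists_isHarnackConstant_sphere (hE : 1 < finrank ℝ E) :
    ∃ C, 0 ≤ C ∧ ∀ R : ℝ, 0 < R → ∀ x y : E, 2 * R ≤ ‖x‖ → ‖y‖ = ‖x‖ →
      IsHarnackConstant {z | R < ‖z‖} C x y := by
  have hsub : sphere (0 : E) 1 ⊆ {z | 1 / 2 < ‖z‖} := fun z hz ↦ by
    rw [mem_sphere_zero_iff_norm] at hz
    norm_num [hz]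
  obtain ⟨C, hC, h⟩ := exists_isHarnackConstant_of_isCompact
    (isOpen_lt continuous_const continuous_norm) hsub (isCompact_sphere 0 1)
    (isPreconnected_sphere (by rw [← finrank_eq_rank]; exact_mod_cast hE) 0 1)
  refine ⟨C, hC, fun R hR x y hx hxy v hv hnonneg ↦ ?_⟩
  have hxpos : 0 < ‖x‖ := by linarith
  have hscale {z : E} (hz : 1 / 2 < ‖z‖) : R < ‖0 + ‖x‖ • z‖ := by
    rw [zero_add, norm_smul, norm_norm]
    nlinarith
  have hunit {z : E} (hz : ‖z‖ = ‖x‖) : ‖x‖⁻¹ • z ∈ sphere (0 : E) 1 := by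
    simp [norm_smul, hz, hxpos.ne']
  have hscaled := h _ (hunit rfl) _ (hunit hxy) (fun z ↦ v (0 + ‖x‖ • z))
    (fun z hz ↦ harmonicAt_comp_add_smul (hv _ (hscale hz))) fun z hz ↦ hnonneg _ (hscale hz)
  simpa [smul_inv_smul₀ hxpos.ne'] using hscaled

theorem exists_eventually_harnack_sphere (hE : 1 < finrank ℝ E) :
    ∃ C, 0 ≤ C ∧ ∀ (u : E → ℝ) (l : ℝ), (∀ᶠ x in cobounded E, HarmonicAt u x) →
      (∀ᶠ x in cobounded E, l ≤ u x) →
      ∀ᶠ x in cobounded E, ∀ y, ‖y‖ = ‖x‖ → u y - l ≤ C * (u x - l) := by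
  obtain ⟨C, hC, h⟩ := exists_isHarnackConstant_sphere hE
  refine ⟨C, hC, fun u l hu hl ↦ ?_⟩
  obtain ⟨R, -, hR⟩ := hasBasis_cobounded_norm.eventually_iff.1 (hu.and hl)
  have hR' {z : E} (hz : max R 1 < ‖z‖) : HarmonicAt u z ∧ l ≤ u z := hR (le_of_max_le_left hz.le)
  filter_upwards [eventually_cobounded_le_norm (2 * max R 1)] with x hx y hxy
  exact h (max R 1) (by positivity) x y hx hxy (fun z ↦ u z - l)
    (fun z hz ↦ (hR' hz).1.sub (harmonicAt_const l)) fun z hz ↦ sub_nonneg.2 (hR' hz).2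

theorem eventually_le_of_frequently_sphere_le [Nontrivial E] {u : E → ℝ} {A : ℝ}
    (hu : ∀ᶠ x in cobounded E, HarmonicAt u x)
    (hA : ∃ᶠ x in cobounded E, ∀ y, ‖y‖ = ‖x‖ → u y ≤ A) : ∀ᶠ x in cobounded E, u x ≤ A := by
  obtain ⟨R, -, hR⟩ := hasBasis_cobounded_norm.eventually_iff.1 hu
  obtain ⟨p, hpA, hp⟩ := (hA.and_eventually (eventually_cobounded_le_norm R)).exists
  filter_upwards [eventually_cobounded_le_norm ‖p‖] with x hpx
  obtain ⟨q, hqA, hxq⟩ := (hA.and_eventually (eventually_cobounded_le_norm ‖x‖)).exists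
  let U : Set E := norm ⁻¹' Icc ‖p‖ ‖q‖
  have hUclosed : IsClosed U := isClosed_Icc.preimage continuous_norm
  have hUbdd : IsBounded U := isBounded_iff_forall_norm_le.2 ⟨‖q‖, fun z hz ↦ hz.2⟩
  have hUharm : HarmonicContOnCl u U :=
    HarmonicOnNhd.harmonicContOnCl fun z hz ↦ hR (hp.trans (hUclosed.closure_eq ▸ hz).1)
  have hUfrontier : ∀ z ∈ frontier U, u z ≤ A := fun z hz ↦ by
    have hz' := continuous_norm.frontier_preimage_subset _ hz
    rw [frontier_Icc (hpx.trans hxq)] at hz'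
    exact hz'.elim (hpA z) (hqA z)
  exact le_of_forall_mem_frontier_le_of_harmonicContOnCl hUbdd hUharm hUfrontier
    (subset_closure ⟨hpx, hxq⟩)

theorem eventually_lt_of_liminf_lt_of_harmonicAt (hE : 1 < finrank ℝ E) {u : E → ℝ}
    (hu : ∀ᶠ x in cobounded E, HarmonicAt u x) (hb : IsBoundedUnder (· ≥ ·) (cobounded E) u)
    (hcob : IsCoboundedUnder (· ≥ ·) (cobounded E) u) {c : ℝ} (hc : liminf u (cobounded E) < c) :
    ∀ᶠ x in cobounded E, u x < c := by
  have : Nontrivial E := nontrivial_of_finrank_pos (one_pos.trans hE)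
  obtain ⟨C, hC, hharnack⟩ := exists_eventually_harnack_sphere hE
  set L := liminf u (cobounded E)
  let ε := (c - L) / (2 * C + 1)
  have hε : 0 < ε := div_pos (sub_pos.2 hc) (by positivity)
  have hεc : L - ε + C * (2 * ε) < c := by
    have : (2 * C + 1) * ε = c - L := mul_div_cancel₀ _ (by positivity)
    linarith
  have hlower : ∀ᶠ x in cobounded E, L - ε ≤ u x :=
    (eventually_lt_of_lt_liminf (sub_lt_self L hε) hb).mono fun x hx ↦ hx.le
  have hsphere : ∃ᶠ x in cobounded E, ∀ y, ‖y‖ = ‖x‖ → u y ≤ L - ε + C * (2 * ε) := by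
    refine ((frequently_lt_of_liminf_lt hcob (lt_add_of_pos_right L hε)).and_eventually
      (hharnack u (L - ε) hu hlower)).mono fun x ⟨hx, hxy⟩ y hy ↦ sub_le_iff_le_add'.1 ?_
    calc u y - (L - ε) ≤ C * (u x - (L - ε)) := hxy y hy
      _ ≤ C * (2 * ε) := by gcongr; linarith [hx]
  exact (eventually_le_of_frequently_sphere_le hu hsphere).mono fun x hx ↦ hx.trans_lt hεc

theorem stmt10_general (hE : 1 < finrank ℝ E) {u : E → ℝ}
    (hu : ∀ᶠ x in cobounded E, HarmonicAt u x) (hb : IsBoundedUnder (· ≥ ·) (cobounded E) u) :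
    Tendsto u (cobounded E) atTop ∨ ∃ a, Tendsto u (cobounded E) (𝓝 a) := by
  refine or_iff_not_imp_left.2 fun htop ↦ ⟨liminf u (cobounded E), ?_⟩
  have hcob : IsCoboundedUnder (· ≥ ·) (cobounded E) u := by
    obtain ⟨b, hub⟩ := not_forall.1 (Filter.tendsto_atTop.not.1 htop)
    exact .of_frequently_le ((not_eventually.1 hub).mono fun x hx ↦ (not_le.1 hx).le)
  exact tendsto_order.2 ⟨fun c hc ↦ eventually_lt_of_lt_liminf hc hb,
    fun c hc ↦ eventually_lt_of_liminf_lt_of_harmonicAt hE hu hb hcob hc⟩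

end Exterior

theorem lap_eq_laplacian {n : ℕ} {u : EuclideanSpace ℝ (Fin n) → ℝ} {x : EuclideanSpace ℝ (Fin n)}
    (hu : ContDiffAt ℝ 2 u x) : lap n u x = Δ u x := by
  have hd : DifferentiableAt ℝ (fderiv ℝ u) x :=
    (hu.fderiv_right (by norm_num)).differentiableAt one_ne_zero
  simp [lap, laplacian_eq_iteratedFDeriv_orthonormalBasis u (EuclideanSpace.basisFun (Fin n) ℝ),
    iteratedFDeriv_two_apply, fderiv_clm_apply hd (differentiableAt_const _)]

theorem harmonicOnNhd_of_lap_eq_zero {n : ℕ} {u : EuclideanSpace ℝ (Fin n) → ℝ}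
    {U : Set (EuclideanSpace ℝ (Fin n))} (hU : IsOpen U) (hu : ContDiffOn ℝ 2 u U)
    (hlap : ∀ x ∈ U, lap n u x = 0) : HarmonicOnNhd u U := fun x hx ↦ by
  refine ⟨hu.contDiffAt (hU.mem_nhds hx), ?_⟩
  filter_upwards [hU.mem_nhds hx] with y hy
  rw [← lap_eq_laplacian (hu.contDiffAt (hU.mem_nhds hy)), hlap y hy, Pi.zero_apply]

/-- a harmonic function on the exterior of the closed unit ball, continuous
up to the boundary and bounded below, converges at infinity (possibly to `+∞`). -/
theorem stmt10 (n : ℕ) (hn : 2 ≤ n) (u : EuclideanSpace ℝ (Fin n) → ℝ)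
    (hcont : ContinuousOn u {x : EuclideanSpace ℝ (Fin n) | 1 ≤ ‖x‖})
    (hreg : ContDiffOn ℝ 2 u {x : EuclideanSpace ℝ (Fin n) | 1 < ‖x‖})
    (hharm : ∀ x : EuclideanSpace ℝ (Fin n), 1 < ‖x‖ → lap n u x = 0)
    (m : ℝ) (hbdd : ∀ x : EuclideanSpace ℝ (Fin n), 1 ≤ ‖x‖ → m ≤ u x) :
    Filter.Tendsto u (Filter.comap (fun x : EuclideanSpace ℝ (Fin n) => ‖x‖)
      Filter.atTop) Filter.atTop ∨
    ∃ a : ℝ, Filter.Tendsto u (Filter.comap (fun x : EuclideanSpace ℝ (Fin n) => ‖x‖)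
      Filter.atTop) (nhds a) := by
  simp only [comap_norm_atTop]
  have hu := harmonicOnNhd_of_lap_eq_zero (isOpen_lt continuous_const continuous_norm) hreg hharm
  exact stmt10_general (by rwa [finrank_euclideanSpace_fin])
    ((eventually_cobounded_le_norm 2).mono fun x hx ↦ hu x (one_lt_two.trans_le hx))
    (isBoundedUnder_of_eventually_ge ((eventually_cobounded_le_norm 1).mono hbdd))
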